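/- Let μ and μ' be distinct stable matchings. Then every nontrivial weakly connected component of Γ*(μ,μ') has at least two vertices, and the number of nontrivial weakly connected components of Γ*(μ,μ') is at most ⌊(|M| + |W|)/3⌋; consequently, the distance between x_μ and x_μ' in the graph on extreme points of P_SMT with adjacency as edges is at most ⌊(|M| + |W|)/3⌋, i.e., the diameter of the 1-skeleton of P_SMT is at most ⌊n/3⌋ where n = |M| + |W|. -/

import Mathlib

/-!
Every man and every woman determines a principal block of `Γ*(μ, μ')`, and the preferences being
total, such a block lies in a single component.  So distinct components involve disjoint sets of
people (`persons_disjoint`), and a nontrivial component involves at least three of them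
(`three_le_card_persons`): two distinct vertices cannot be built from one man and one woman.  This
bounds the number of nontrivial components.

For the distance, let `C` be a nontrivial component and let `exch μ μ' C` be the matching which
agrees with `μ'` on the people of `C` and with `μ` elsewhere.

* It is stable (`exch_stable`): a pair blocking it joins a person of `C` to a person outside `C`;
  stability of `μ` and `μ'` then places that pair in `Γ*(μ, μ')`, hence in `C`, a contradiction.
* It is adjacent to `μ` (`exch_adjacent`).  If the midpoint of the two characteristic vectors is a
  convex combination of stable matchings `ρ`, then each `ρ` gives every person the partner in `μ`
  or the one in `exch μ μ' C` (`half_mem`), and for a person of `C` the total weight of those `ρ`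
  choosing the former is `1/2` (`half_sum`).  For a vertex `(m, w)` of `C`, stability of `ρ` shows
  that one of the choices `ρ(m) = μ(m)`, `ρ(w) = μ(w)` implies the other; since both have weight
  `1/2`, they are equivalent.  By connectedness `ρ` makes the same choice throughout `C`.

Replacing `μ` by `exch μ μ' C` makes at least three people agree with `μ'` and disturbs nobody
else, so induction on the number of people whose partners in `μ` and `μ'` differ gives a path of
length at most a third of that number (`exists_path`).
-/

open scoped Classical

/-- An instance of the stable marriage problem with ties: men `M`, women `W`,
acceptable pairs `Acc`, and for each man (resp. woman) a total preorder on the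
acceptable partners. `mle m w w'` means `w ≤_m w'`, `wle w m m'` means `m ≤_w m'`. -/
structure SMTI (M W : Type*) where
  Acc : Set (M × W)
  mle : M → W → W → Prop
  wle : W → M → M → Prop
  mle_refl : ∀ m w, (m, w) ∈ Acc → mle m w w
  mle_trans : ∀ m w₁ w₂ w₃, mle m w₁ w₂ → mle m w₂ w₃ → mle m w₁ w₃
  mle_total : ∀ m w w', (m, w) ∈ Acc → (m, w') ∈ Acc → mle m w w' ∨ mle m w' w
  mle_mem : ∀ m w w', mle m w w' → (m, w) ∈ Acc ∧ (m, w') ∈ Acc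
  wle_refl : ∀ w m, (m, w) ∈ Acc → wle w m m
  wle_trans : ∀ w m₁ m₂ m₃, wle w m₁ m₂ → wle w m₂ m₃ → wle w m₁ m₃
  wle_total : ∀ w m m', (m, w) ∈ Acc → (m', w) ∈ Acc → wle w m m' ∨ wle w m' m
  wle_mem : ∀ w m m', wle w m m' → (m, w) ∈ Acc ∧ (m', w) ∈ Acc

namespace SMTI

variable {M W : Type*} (I : SMTI M W)

/-- `≤_m` extended to `Option W`, where `none` (being single) is strictly below
every acceptable partner. -/
def mleO (m : M) : Option W → Option W → Prop
  | none, none => True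
  | none, some w => (m, w) ∈ I.Acc
  | some _, none => False
  | some w, some w' => I.mle m w w'

/-- `≤_w` extended to `Option M`. -/
def wleO (w : W) : Option M → Option M → Prop
  | none, none => True
  | none, some m => (m, w) ∈ I.Acc
  | some _, none => False
  | some m, some m' => I.wle w m m'

/-- strict version of `mleO` -/
def mltO (m : M) (a b : Option W) : Prop := I.mleO m a b ∧ ¬ I.mleO m b a

/-- strict version of `wleO` -/
def wltO (w : W) (a b : Option M) : Prop := I.wleO w a b ∧ ¬ I.wleO w b a

/-- A matching: a set of acceptable pairs in which every man and every woman
occurs at most once. -/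
def IsMatching (μ : Set (M × W)) : Prop :=
  μ ⊆ I.Acc ∧ (∀ m w w', (m, w) ∈ μ → (m, w') ∈ μ → w = w') ∧
    (∀ m m' w, (m, w) ∈ μ → (m', w) ∈ μ → m = m')

/-- the partner `μ(m)` of a man `m` (`none` if `m` is single) -/
noncomputable def mpartner (μ : Set (M × W)) (m : M) : Option W :=
  if h : ∃ w, (m, w) ∈ μ then some h.choose else none

/-- the partner `μ(w)` of a woman `w` (`none` if `w` is single) -/
noncomputable def wpartner (μ : Set (M × W)) (w : W) : Option M :=
  if h : ∃ m, (m, w) ∈ μ then some h.choose else none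

/-- A stable matching: no acceptable pair is blocking. -/
def IsStable (μ : Set (M × W)) : Prop :=
  I.IsMatching μ ∧ ∀ p ∈ I.Acc,
    I.mleO p.1 (some p.2) (mpartner μ p.1) ∨ I.wleO p.2 (some p.1) (wpartner μ p.2)

/-- `between_m(a, b, c)` -/
def betweenM (m : M) (a b c : Option W) : Prop :=
  a = b ∨ a = c ∨ (I.mltO m b a ∧ I.mleO m a c) ∨ (I.mltO m c a ∧ I.mleO m a b)

/-- `between_w(a, b, c)` -/
def betweenW (w : W) (a b c : Option M) : Prop :=
  a = b ∨ a = c ∨ (I.wltO w b a ∧ I.wleO w a c) ∨ (I.wltO w c a ∧ I.wleO w a b)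

/-- the (directed) edge relation of the marriage graph `Γ` -/
def gammaEdge (p q : M × W) : Prop :=
  p ∈ I.Acc ∧ q ∈ I.Acc ∧
    ((p.1 = q.1 ∧ p.2 ≠ q.2 ∧ I.mle p.1 p.2 q.2) ∨
      (p.2 = q.2 ∧ p.1 ≠ q.1 ∧ I.wle p.2 p.1 q.1))

/-- the vertex set of `Γ*(μ, μ')` -/
noncomputable def starV (μ μ' : Set (M × W)) : Set (M × W) :=
  {p | p ∈ I.Acc ∧
    I.betweenM p.1 (some p.2) (mpartner μ p.1) (mpartner μ' p.1) ∧
    I.betweenW p.2 (some p.1) (wpartner μ p.2) (wpartner μ' p.2)}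

/-- undirected adjacency inside the subgraph of `Γ` induced by the vertex set `S` -/
def adjIn (S : Set (M × W)) (p q : M × W) : Prop :=
  p ∈ S ∧ q ∈ S ∧ (I.gammaEdge p q ∨ I.gammaEdge q p)

/-- `p` and `q` lie in the same weakly connected component of the subgraph of `Γ`
induced by `S` -/
def connIn (S : Set (M × W)) (p q : M × W) : Prop :=
  p ∈ S ∧ q ∈ S ∧ Relation.ReflTransGen (I.adjIn S) p q

/-- `p` is an isolated vertex of the subgraph of `Γ` induced by `S` -/
def IsIsolated (S : Set (M × W)) (p : M × W) : Prop :=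
  p ∈ S ∧ ∀ q, ¬ I.adjIn S p q

/-- `C` is a nontrivial weakly connected component of the subgraph of `Γ`
induced by `S` -/
def IsNontrivialComp (S : Set (M × W)) (C : Set (M × W)) : Prop :=
  (∃ v ∈ S, C = {u | I.connIn S v u}) ∧ ¬ C.Subsingleton

/-- `B` is the vertex set of a principal block (`P^m` or `P^w`) of the subgraph
of `Γ` induced by `S` -/
def IsPrincipalBlock (S : Set (M × W)) (B : Set (M × W)) : Prop :=
  (∃ m : M, B = {p ∈ S | p.1 = m}) ∨ (∃ w : W, B = {p ∈ S | p.2 = w})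

/-- characteristic vector `x_ν ∈ ℝ^A` of a set of pairs -/
noncomputable def chi (ν : Set (M × W)) : M × W → ℝ := fun p => if p ∈ ν then 1 else 0

/-- standard basis vector `e_v` -/
noncomputable def eVec (v : M × W) : M × W → ℝ := fun p => if p = v then 1 else 0

/-- dot product on `ℝ^{M × W}` -/
noncomputable def dotP [Fintype M] [Fintype W] (α x : M × W → ℝ) : ℝ := ∑ p, α p * x p

/-- `E`: the span of all vectors `α` (supported on the acceptable pairs) for which
there is `β` so that `α · x ≥ β` is valid for all stable matchings and tight at
both `μ` and `μ'`. -/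
noncomputable def Espace [Fintype M] [Fintype W] (μ μ' : Set (M × W)) :
    Submodule ℝ (M × W → ℝ) :=
  Submodule.span ℝ {α | (∀ p, p ∉ I.Acc → α p = 0) ∧ ∃ β : ℝ,
    (∀ ν, I.IsStable ν → β ≤ dotP α (chi ν)) ∧
    dotP α (chi μ) = β ∧ dotP α (chi μ') = β}

/-- `a` is linked to `b`: `E` contains `λ e_a + γ e_b` with `λ ≠ 0`. -/
def linked [Fintype M] [Fintype W] (μ μ' : Set (M × W)) (a b : M × W) : Prop :=
  ∃ l g : ℝ, l ≠ 0 ∧ l • eVec a + g • eVec b ∈ I.Espace μ μ'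

/-- `x_μ` and `x_μ'` are adjacent extreme points of `P_SMT`: they are distinct, and
whenever their midpoint is a convex combination of extreme points (characteristic
vectors of stable matchings), only `x_μ` and `x_μ'` get nonzero weight. -/
def AdjacentSM [Fintype M] [Fintype W] (μ μ' : Set (M × W)) : Prop :=
  chi μ ≠ chi μ' ∧
  ∀ (T : Finset (Set (M × W))) (c : Set (M × W) → ℝ),
    (∀ ν ∈ T, I.IsStable ν) → (∀ ν ∈ T, 0 ≤ c ν) → (∑ ν ∈ T, c ν) = 1 →
    (∑ ν ∈ T, c ν • chi ν) = (2⁻¹ : ℝ) • (chi μ + chi μ') →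
    ∀ ν ∈ T, c ν ≠ 0 → chi ν = chi μ ∨ chi ν = chi μ'

end SMTI

namespace SMTI

/-! ### Partners and preferences -/

section Basic

variable {M W : Type*} {I : SMTI M W} {μ ν : Set (M × W)}

lemma mpartner_eq_some (h : I.IsMatching μ) {m : M} {w : W} :
    mpartner μ m = some w ↔ (m, w) ∈ μ := by
  unfold mpartner
  split_ifs with hx
  · rw [Option.some_inj]
    exact ⟨fun e => e ▸ hx.choose_spec, fun e => h.2.1 _ _ _ hx.choose_spec e⟩
  · exact ⟨fun e => by simp at e, fun e => (hx ⟨w, e⟩).elim⟩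

lemma wpartner_eq_some (h : I.IsMatching μ) {m : M} {w : W} :
    wpartner μ w = some m ↔ (m, w) ∈ μ := by
  unfold wpartner
  split_ifs with hx
  · rw [Option.some_inj]
    exact ⟨fun e => e ▸ hx.choose_spec, fun e => h.2.2 _ _ _ hx.choose_spec e⟩
  · exact ⟨fun e => by simp at e, fun e => (hx ⟨m, e⟩).elim⟩

lemma mpartner_congr {m : M} (h : ∀ w, (m, w) ∈ μ ↔ (m, w) ∈ ν) :
    mpartner μ m = mpartner ν m := by
  have : (fun w => (m, w) ∈ μ) = (fun w => (m, w) ∈ ν) := funext fun w => propext (h w)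
  unfold mpartner
  simp only [this]

lemma wpartner_congr {w : W} (h : ∀ m, (m, w) ∈ μ ↔ (m, w) ∈ ν) :
    wpartner μ w = wpartner ν w := by
  have : (fun m => (m, w) ∈ μ) = (fun m => (m, w) ∈ ν) := funext fun m => propext (h m)
  unfold wpartner
  simp only [this]

lemma mltO_of_not (h : I.IsMatching μ) {m : M} {w : W} (hA : (m, w) ∈ I.Acc)
    (hn : ¬ I.mleO m (some w) (mpartner μ m)) : I.mltO m (mpartner μ m) (some w) := by
  refine ⟨?_, hn⟩
  cases e : mpartner μ m with
  | none => exact hA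
  | some w' =>
    rw [e] at hn
    exact (I.mle_total m w w' hA (h.1 ((mpartner_eq_some h).1 e))).resolve_left hn

lemma wltO_of_not (h : I.IsMatching μ) {m : M} {w : W} (hA : (m, w) ∈ I.Acc)
    (hn : ¬ I.wleO w (some m) (wpartner μ w)) : I.wltO w (wpartner μ w) (some m) := by
  refine ⟨?_, hn⟩
  cases e : wpartner μ w with
  | none => exact hA
  | some m' =>
    rw [e] at hn
    exact (I.wle_total w m m' hA (h.1 ((wpartner_eq_some h).1 e))).resolve_left hn

lemma betweenM_self {m : M} {a b : Option W} (h : I.betweenM m a b b) : a = b := by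
  rcases h with h | h | ⟨h, h'⟩ | ⟨h, h'⟩
  · exact h
  · exact h
  · exact (h.2 h').elim
  · exact (h.2 h').elim

lemma betweenW_self {w : W} {a b : Option M} (h : I.betweenW w a b b) : a = b := by
  rcases h with h | h | ⟨h, h'⟩ | ⟨h, h'⟩
  · exact h
  · exact h
  · exact (h.2 h').elim
  · exact (h.2 h').elim

end Basic

/-! ### Vertices and components of `Γ*` -/

section Star

variable {M W : Type*} {I : SMTI M W} {μ μ' : Set (M × W)} {S C : Set (M × W)}

lemma left_mem_starV (h : I.IsMatching μ) {p : M × W} (hp : p ∈ μ) : p ∈ I.starV μ μ' :=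
  ⟨h.1 hp, Or.inl ((mpartner_eq_some h).2 hp).symm, Or.inl ((wpartner_eq_some h).2 hp).symm⟩

lemma right_mem_starV (h : I.IsMatching μ') {p : M × W} (hp : p ∈ μ') : p ∈ I.starV μ μ' :=
  ⟨h.1 hp, Or.inr (Or.inl ((mpartner_eq_some h).2 hp).symm),
    Or.inr (Or.inl ((wpartner_eq_some h).2 hp).symm)⟩

lemma adjIn_symm {p q : M × W} (h : I.adjIn S p q) : I.adjIn S q p :=
  ⟨h.2.1, h.1, h.2.2.symm⟩

/-- Principal blocks are cliques, because preferences are total. -/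
lemma adjIn_of_block (hS : S ⊆ I.Acc) {p q : M × W} (hp : p ∈ S) (hq : q ∈ S) (hne : p ≠ q)
    (h : p.1 = q.1 ∨ p.2 = q.2) : I.adjIn S p q := by
  obtain ⟨m, w⟩ := p
  obtain ⟨m', w'⟩ := q
  refine ⟨hp, hq, ?_⟩
  rcases h with h | h <;> simp only at h <;> subst h
  · have hw : w ≠ w' := fun e => hne (by rw [e])
    rcases I.mle_total m w w' (hS hp) (hS hq) with h | h
    · exact Or.inl ⟨hS hp, hS hq, Or.inl ⟨rfl, hw, h⟩⟩
    · exact Or.inr ⟨hS hq, hS hp, Or.inl ⟨rfl, hw.symm, h⟩⟩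
  · have hm : m ≠ m' := fun e => hne (by rw [e])
    rcases I.wle_total w m m' (hS hp) (hS hq) with h | h
    · exact Or.inl ⟨hS hp, hS hq, Or.inr ⟨rfl, hm, h⟩⟩
    · exact Or.inr ⟨hS hq, hS hp, Or.inr ⟨rfl, hm.symm, h⟩⟩

lemma adjIn_block {p q : M × W} (h : I.adjIn S p q) : p ≠ q ∧ (p.1 = q.1 ∨ p.2 = q.2) := by
  obtain ⟨m, w⟩ := p
  obtain ⟨m', w'⟩ := q
  rcases h.2.2 with ⟨-, -, ⟨h1, h2, -⟩ | ⟨h1, h2, -⟩⟩ | ⟨-, -, ⟨h1, h2, -⟩ | ⟨h1, h2, -⟩⟩ <;>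
    simp_all [eq_comm]

/-- `C` is a weakly connected component, trivial or not, of the subgraph induced by `S`. -/
def IsComp (I : SMTI M W) (S C : Set (M × W)) : Prop :=
  ∃ v ∈ S, C = {u | I.connIn S v u}

lemma IsComp.subset (hC : I.IsComp S C) : C ⊆ S := by
  obtain ⟨v, -, rfl⟩ := hC
  exact fun u hu => hu.2.1

lemma IsComp.connected (hC : I.IsComp S C) {p q : M × W} (hp : p ∈ C) (hq : q ∈ C) :
    Relation.ReflTransGen (I.adjIn S) p q := by
  obtain ⟨v, -, rfl⟩ := hC
  exact (Relation.reflTransGen_swap.1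
    (Relation.ReflTransGen.mono (fun _ _ => adjIn_symm) _ _ hp.2.2)).trans hq.2.2

lemma IsComp.mem_of_reach (hC : I.IsComp S C) {p q : M × W} (hp : p ∈ C) (hq : q ∈ S)
    (h : Relation.ReflTransGen (I.adjIn S) p q) : q ∈ C := by
  obtain ⟨v, hv, rfl⟩ := hC
  exact ⟨hv, hq, hp.2.2.trans h⟩

lemma IsComp.mem_of_block (hS : S ⊆ I.Acc) (hC : I.IsComp S C) {p q : M × W} (hp : p ∈ C)
    (hq : q ∈ S) (h : p.1 = q.1 ∨ p.2 = q.2) : q ∈ C := by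
  by_cases e : p = q
  · exact e ▸ hp
  · exact hC.mem_of_reach hp hq (.single (adjIn_of_block hS (hC.subset hp) hq e h))

lemma IsComp.eq_of_mem {D : Set (M × W)} (hC : I.IsComp S C) (hD : I.IsComp S D) {p : M × W}
    (hp : p ∈ C) (hp' : p ∈ D) : C = D := by
  ext q
  exact ⟨fun hq => hD.mem_of_reach hp' (hC.subset hq) (hC.connected hp hq),
    fun hq => hC.mem_of_reach hp (hD.subset hq) (hD.connected hp' hq)⟩

lemma starV_subset : I.starV μ μ' ⊆ I.Acc := fun _ h => h.1

lemma mem_of_mpartner_eq (h : I.IsMatching μ) (h' : I.IsMatching μ') {p : M × W}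
    (hp : p ∈ I.starV μ μ') (e : mpartner μ p.1 = mpartner μ' p.1) : p ∈ μ ∧ p ∈ μ' := by
  have hb := hp.2.1
  rw [← e] at hb
  have := betweenM_self hb
  exact ⟨(mpartner_eq_some h).1 this.symm, (mpartner_eq_some h').1 (this.trans e).symm⟩

lemma mem_of_wpartner_eq (h : I.IsMatching μ) (h' : I.IsMatching μ') {p : M × W}
    (hp : p ∈ I.starV μ μ') (e : wpartner μ p.2 = wpartner μ' p.2) : p ∈ μ ∧ p ∈ μ' := by
  have hb := hp.2.2
  rw [← e] at hb
  have := betweenW_self hb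
  exact ⟨(wpartner_eq_some h).1 this.symm, (wpartner_eq_some h').1 (this.trans e).symm⟩

/-- A common pair of `μ` and `μ'` is an isolated vertex of `Γ*(μ, μ')`. -/
lemma isolated_of_mem (h : I.IsMatching μ) (h' : I.IsMatching μ') {p q : M × W} (hp : p ∈ μ)
    (hp' : p ∈ μ') : ¬ I.adjIn (I.starV μ μ') p q := by
  intro ha
  obtain ⟨hne, hb⟩ := adjIn_block ha
  obtain ⟨m, w⟩ := p
  obtain ⟨m', w'⟩ := q
  rcases hb with hb | hb <;> simp only at hb <;> subst hb
  · have e : mpartner μ m = mpartner μ' m := by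
      rw [(mpartner_eq_some h).2 hp, (mpartner_eq_some h').2 hp']
    have := (mem_of_mpartner_eq h h' ha.2.1 e).1
    exact hne (by rw [h.2.1 _ _ _ hp this])
  · have e : wpartner μ w = wpartner μ' w := by
      rw [(wpartner_eq_some h).2 hp, (wpartner_eq_some h').2 hp']
    have := (mem_of_wpartner_eq h h' ha.2.1 e).1
    exact hne (by rw [h.2.2 _ _ _ hp this])

lemma not_common (h : I.IsMatching μ) (h' : I.IsMatching μ')
    (hC : I.IsComp (I.starV μ μ') C) (hnt : ¬ C.Subsingleton) {p : M × W} (hp : p ∈ C) :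
    ¬ (p ∈ μ ∧ p ∈ μ') := by
  rintro ⟨h1, h2⟩
  refine hnt (Set.subsingleton_of_subset_singleton (a := p) fun q hq => ?_)
  rcases (hC.connected hp hq).cases_head with e | ⟨r, hr, -⟩
  · exact e.symm
  · exact (isolated_of_mem h h' h1 h2 hr).elim

lemma mpartner_ne (h : I.IsMatching μ) (h' : I.IsMatching μ')
    (hC : I.IsComp (I.starV μ μ') C) (hnt : ¬ C.Subsingleton) {p : M × W} (hp : p ∈ C) :
    mpartner μ p.1 ≠ mpartner μ' p.1 :=
  fun e => not_common h h' hC hnt hp (mem_of_mpartner_eq h h' (hC.subset hp) e)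

lemma wpartner_ne (h : I.IsMatching μ) (h' : I.IsMatching μ')
    (hC : I.IsComp (I.starV μ μ') C) (hnt : ¬ C.Subsingleton) {p : M × W} (hp : p ∈ C) :
    wpartner μ p.2 ≠ wpartner μ' p.2 :=
  fun e => not_common h h' hC hnt hp (mem_of_wpartner_eq h h' (hC.subset hp) e)

/-- Two distinct stable matchings are separated by some nontrivial component: if `p ∈ μ \ μ'`, then
stability of `μ'` provides one of the two people of `p` with another partner in `μ'`. -/
lemma exists_comp (hμ : I.IsStable μ) (hμ' : I.IsStable μ') (hne : μ ≠ μ') :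
    ∃ C, I.IsComp (I.starV μ μ') C ∧ ¬ C.Subsingleton := by
  have key : ∀ {μ₁ μ₂ : Set (M × W)}, I.IsStable μ₁ → I.IsStable μ₂ → ∀ p ∈ μ₁, p ∉ μ₂ →
      ∃ q ∈ μ₂, p ≠ q ∧ (p.1 = q.1 ∨ p.2 = q.2) := by
    rintro μ₁ μ₂ h₁ h₂ ⟨m, w⟩ hp hp'
    rcases h₂.2 _ (h₁.1.1 hp) with h | h
    · cases e : mpartner μ₂ m with
      | none => simp only [e] at h; exact h.elim
      | some w' =>
        have := (mpartner_eq_some h₂.1).1 e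
        exact ⟨_, this, fun e => hp' (e ▸ this), Or.inl rfl⟩
    · cases e : wpartner μ₂ w with
      | none => simp only [e] at h; exact h.elim
      | some m' =>
        have := (wpartner_eq_some h₂.1).1 e
        exact ⟨_, this, fun e => hp' (e ▸ this), Or.inr rfl⟩
  have key2 : ∃ p ∈ I.starV μ μ', ∃ q ∈ I.starV μ μ', p ≠ q ∧ (p.1 = q.1 ∨ p.2 = q.2) := by
    by_cases hs : μ ⊆ μ'
    · obtain ⟨p, hp, hp'⟩ := Set.not_subset.1 (fun h => hne (hs.antisymm h))
      obtain ⟨q, hq, h⟩ := key hμ' hμ p hp hp'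
      exact ⟨p, right_mem_starV hμ'.1 hp, q, left_mem_starV hμ.1 hq, h⟩
    · obtain ⟨p, hp, hp'⟩ := Set.not_subset.1 hs
      obtain ⟨q, hq, h⟩ := key hμ hμ' p hp hp'
      exact ⟨p, left_mem_starV hμ.1 hp, q, right_mem_starV hμ'.1 hq, h⟩
  obtain ⟨p, hp, q, hq, hpq, hb⟩ := key2
  have hC : I.IsComp (I.starV μ μ') {u | I.connIn (I.starV μ μ') p u} := ⟨p, hp, rfl⟩
  have hpC : p ∈ {u | I.connIn (I.starV μ μ') p u} := ⟨hp, hp, .refl⟩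
  exact ⟨_, hC, fun h => hpq (h hpC (hC.mem_of_block starV_subset hpC hq hb))⟩

end Star

/-! ### The people of a component -/

section Persons

variable {M W : Type*} [Fintype M] [Fintype W] {I : SMTI M W} {μ μ' : Set (M × W)}
  {S C : Set (M × W)}

/-- The men and women occurring in a set of pairs. -/
noncomputable def persons (C : Set (M × W)) : Finset (M ⊕ W) :=
  Finset.univ.filter fun d => ∃ p ∈ C, d = Sum.inl p.1 ∨ d = Sum.inr p.2

lemma mem_persons {d : M ⊕ W} : d ∈ persons C ↔ ∃ p ∈ C, d = Sum.inl p.1 ∨ d = Sum.inr p.2 := by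
  simp [persons]

lemma three_le_card_persons (hC : ¬ C.Subsingleton) : 3 ≤ (persons C).card := by
  obtain ⟨⟨m, w⟩, hp, ⟨m', w'⟩, hq, hne⟩ := Set.not_subsingleton_iff.1 hC
  have hm : Sum.inl m ∈ persons C := mem_persons.2 ⟨_, hp, Or.inl rfl⟩
  have hm' : Sum.inl m' ∈ persons C := mem_persons.2 ⟨_, hq, Or.inl rfl⟩
  have hw : Sum.inr w ∈ persons C := mem_persons.2 ⟨_, hp, Or.inr rfl⟩
  have hw' : Sum.inr w' ∈ persons C := mem_persons.2 ⟨_, hq, Or.inr rfl⟩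
  refine Nat.succ_le_iff.2 (Finset.two_lt_card.2 ?_)
  by_cases e : m = m'
  · have : w ≠ w' := fun e' => hne (by rw [e, e'])
    exact ⟨_, hm, _, hw, _, hw', by simp, by simp, by simpa using this⟩
  · exact ⟨_, hm, _, hm', _, hw, by simpa using e, by simp, by simp⟩

lemma persons_disjoint {D : Set (M × W)} (hS : S ⊆ I.Acc) (hC : I.IsComp S C)
    (hD : I.IsComp S D) (hne : C ≠ D) : Disjoint (persons C) (persons D) := by
  rw [Finset.disjoint_left]
  intro d h1 h2
  obtain ⟨p, hp, h1⟩ := mem_persons.1 h1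
  obtain ⟨q, hq, h2⟩ := mem_persons.1 h2
  refine hne (hC.eq_of_mem hD (hC.mem_of_block hS hp (hD.subset hq) ?_) hq)
  rcases h1 with rfl | rfl <;> rcases h2 with h2 | h2 <;> simp_all

lemma ncard_comps_le (hS : S ⊆ I.Acc) :
    {C | I.IsNontrivialComp S C}.ncard ≤ (Fintype.card M + Fintype.card W) / 3 := by
  have hfin : {C | I.IsNontrivialComp S C}.Finite := Set.toFinite _
  rw [Set.ncard_eq_toFinset_card _ hfin, Nat.le_div_iff_mul_le (by norm_num)]
  have hd : ∀ C ∈ hfin.toFinset, ∀ D ∈ hfin.toFinset, C ≠ D →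
      Disjoint (persons C) (persons D) := fun C hC D hD hne =>
    persons_disjoint hS (hfin.mem_toFinset.1 hC).1 (hfin.mem_toFinset.1 hD).1 hne
  calc hfin.toFinset.card * 3 ≤ ∑ C ∈ hfin.toFinset, (persons C).card := by
        rw [← smul_eq_mul]
        exact Finset.card_nsmul_le_sum _ _ _ fun C hC =>
          three_le_card_persons (hfin.mem_toFinset.1 hC).2
    _ = (hfin.toFinset.biUnion persons).card := (Finset.card_biUnion hd).symm
    _ ≤ Fintype.card (M ⊕ W) := Finset.card_le_univ _
    _ = _ := Fintype.card_sum

end Persons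

/-! ### Exchanging along a component -/

section Exchange

variable {M W : Type*} {I : SMTI M W} {μ μ' : Set (M × W)} {C : Set (M × W)}

/-- The set of pairs agreeing with `μ'` inside `C` and with `μ` outside `C`. -/
def exch (μ μ' C : Set (M × W)) : Set (M × W) :=
  {p | (p ∈ C ∧ p ∈ μ') ∨ (p ∉ C ∧ p ∈ μ)}

lemma exch_m_in (h : I.IsMatching μ) (h' : I.IsMatching μ')
    (hC : I.IsComp (I.starV μ μ') C) {p : M × W} (hp : p ∈ C) :
    mpartner (exch μ μ' C) p.1 = mpartner μ' p.1 := by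
  refine mpartner_congr fun w => ⟨?_, fun hw => Or.inl ⟨?_, hw⟩⟩
  · rintro (hw | hw)
    · exact hw.2
    · exact (hw.1 (hC.mem_of_block starV_subset hp (left_mem_starV h hw.2) (Or.inl rfl))).elim
  · exact hC.mem_of_block starV_subset hp (right_mem_starV h' hw) (Or.inl rfl)

lemma exch_w_in (h : I.IsMatching μ) (h' : I.IsMatching μ')
    (hC : I.IsComp (I.starV μ μ') C) {p : M × W} (hp : p ∈ C) :
    wpartner (exch μ μ' C) p.2 = wpartner μ' p.2 := by
  refine wpartner_congr fun w => ⟨?_, fun hw => Or.inl ⟨?_, hw⟩⟩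
  · rintro (hw | hw)
    · exact hw.2
    · exact (hw.1 (hC.mem_of_block starV_subset hp (left_mem_starV h hw.2) (Or.inr rfl))).elim
  · exact hC.mem_of_block starV_subset hp (right_mem_starV h' hw) (Or.inr rfl)

lemma exch_m_out {m : M} (hm : ∀ w, (m, w) ∉ C) :
    mpartner (exch μ μ' C) m = mpartner μ m :=
  mpartner_congr fun w => by simp [exch, hm w]

lemma exch_w_out {w : W} (hw : ∀ m, (m, w) ∉ C) :
    wpartner (exch μ μ' C) w = wpartner μ w :=
  wpartner_congr fun m => by simp [exch, hw m]

lemma exch_matching (h : I.IsMatching μ) (h' : I.IsMatching μ')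
    (hC : I.IsComp (I.starV μ μ') C) : I.IsMatching (exch μ μ' C) := by
  refine ⟨?_, ?_, ?_⟩
  · rintro p (hp | hp)
    · exact h'.1 hp.2
    · exact h.1 hp.2
  · rintro m w w' (h1 | h1) (h2 | h2)
    · exact h'.2.1 _ _ _ h1.2 h2.2
    · exact (h2.1 (hC.mem_of_block starV_subset h1.1 (left_mem_starV h h2.2) (Or.inl rfl))).elim
    · exact (h1.1 (hC.mem_of_block starV_subset h2.1 (left_mem_starV h h1.2) (Or.inl rfl))).elim
    · exact h.2.1 _ _ _ h1.2 h2.2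
  · rintro m m' w (h1 | h1) (h2 | h2)
    · exact h'.2.2 _ _ _ h1.2 h2.2
    · exact (h2.1 (hC.mem_of_block starV_subset h1.1 (left_mem_starV h h2.2) (Or.inr rfl))).elim
    · exact (h1.1 (hC.mem_of_block starV_subset h2.1 (left_mem_starV h h1.2) (Or.inr rfl))).elim
    · exact h.2.2 _ _ _ h1.2 h2.2

lemma exch_stable (hμ : I.IsStable μ) (hμ' : I.IsStable μ')
    (hC : I.IsComp (I.starV μ μ') C) : I.IsStable (exch μ μ' C) := by
  refine ⟨exch_matching hμ.1 hμ'.1 hC, ?_⟩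
  rintro ⟨m, w⟩ hA
  by_contra hcon
  obtain ⟨hbm, hbw⟩ := not_or.1 hcon
  simp only at hbm hbw
  have s := hμ.2 _ hA
  have s' := hμ'.2 _ hA
  simp only at s s'
  by_cases hm : ∃ w', (m, w') ∈ C <;> by_cases hw : ∃ m', (m', w) ∈ C
  · obtain ⟨w', hm⟩ := hm
    obtain ⟨m', hw⟩ := hw
    rw [exch_m_in hμ.1 hμ'.1 hC hm] at hbm
    rw [exch_w_in hμ.1 hμ'.1 hC hw] at hbw
    exact s'.elim hbm hbw
  · obtain ⟨w', hm⟩ := hm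
    push Not at hw
    rw [exch_m_in hμ.1 hμ'.1 hC hm] at hbm
    rw [exch_w_out hw] at hbw
    simp only at hbm
    -- `μ'(m) < w ≤ μ(m)` and `μ(w) < m ≤ μ'(w)`, so the blocking pair is a vertex of `Γ*`
    have hmem : (m, w) ∈ I.starV μ μ' :=
      ⟨hA, Or.inr (Or.inr (Or.inr ⟨mltO_of_not hμ'.1 hA hbm, s.resolve_right hbw⟩)),
        Or.inr (Or.inr (Or.inl ⟨wltO_of_not hμ.1 hA hbw, s'.resolve_left hbm⟩))⟩
    exact hw m (hC.mem_of_block starV_subset hm hmem (Or.inl rfl))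
  · obtain ⟨m', hw⟩ := hw
    push Not at hm
    rw [exch_m_out hm] at hbm
    rw [exch_w_in hμ.1 hμ'.1 hC hw] at hbw
    simp only at hbw
    have hmem : (m, w) ∈ I.starV μ μ' :=
      ⟨hA, Or.inr (Or.inr (Or.inl ⟨mltO_of_not hμ.1 hA hbm, s'.resolve_right hbw⟩)),
        Or.inr (Or.inr (Or.inr ⟨wltO_of_not hμ'.1 hA hbw, s.resolve_left hbm⟩))⟩
    exact hm w (hC.mem_of_block starV_subset hw hmem (Or.inr rfl))
  · push Not at hm hw
    rw [exch_m_out hm] at hbm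
    rw [exch_w_out hw] at hbw
    exact s.elim hbm hbw

lemma exch_ne (hμ : I.IsStable μ) (hμ' : I.IsStable μ')
    (hC : I.IsComp (I.starV μ μ') C) (hnt : ¬ C.Subsingleton) : μ ≠ exch μ μ' C := by
  intro e
  obtain ⟨p, hp, -⟩ := Set.not_subsingleton_iff.1 hnt
  have h1 := exch_m_in hμ.1 hμ'.1 hC hp
  rw [← e] at h1
  exact mpartner_ne hμ.1 hμ'.1 hC hnt hp h1

lemma chi_injective : Function.Injective (chi : Set (M × W) → M × W → ℝ) := by
  intro μ ν h
  ext p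
  have := congrFun h p
  by_cases h1 : p ∈ μ <;> by_cases h2 : p ∈ ν <;> simp_all [chi]

end Exchange

/-! ### Convex combinations equal to a midpoint -/

section Half

variable {ι α : Type*} {T : Finset ι} {c : ι → ℝ} {r : ι → Option α} {x y : Option α}

lemma eq_zero_of_weighted (h0 : ∀ i ∈ T, 0 ≤ c i) {f : ι → ℝ}
    (hf : ∀ i ∈ T, c i ≠ 0 → 0 ≤ f i) (hs : ∑ i ∈ T, c i * f i = 0) :
    ∀ i ∈ T, c i ≠ 0 → f i = 0 := by
  have hnn : ∀ i ∈ T, 0 ≤ c i * f i := by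
    intro i hi
    by_cases e : c i = 0
    · simp [e]
    · exact mul_nonneg (h0 i hi) (hf i hi e)
  intro i hi hc
  exact (mul_eq_zero.1 ((Finset.sum_eq_zero_iff_of_nonneg hnn).1 hs i hi)).resolve_left hc

/-- If the random partner `r` has, at every actual partner `a`, the distribution putting mass `1/2`
on each of `x` and `y`, then `r` takes only the values `x` and `y`, where `none` also counts. -/
lemma half_mem (h0 : ∀ i ∈ T, 0 ≤ c i) (h1 : ∑ i ∈ T, c i = 1)
    (h : ∀ a : α, ∑ i ∈ T, c i * (if r i = some a then 1 else 0) =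
      2⁻¹ * ((if x = some a then 1 else 0) + (if y = some a then 1 else 0))) :
    ∀ i ∈ T, c i ≠ 0 → r i = x ∨ r i = y := by
  intro i hi hc
  by_contra hcon
  obtain ⟨hx, hy⟩ := not_or.1 hcon
  cases hr : r i with
  | some a =>
    rw [hr] at hx hy
    have := h a
    rw [if_neg (Ne.symm hx), if_neg (Ne.symm hy), add_zero, mul_zero] at this
    have := eq_zero_of_weighted h0 (fun i _ _ => by split_ifs <;> norm_num) this i hi hc
    simp [hr] at this
  | none =>
    rw [hr] at hx hy
    obtain ⟨a, rfl⟩ := Option.ne_none_iff_exists'.1 (Ne.symm hx)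
    obtain ⟨b, rfl⟩ := Option.ne_none_iff_exists'.1 (Ne.symm hy)
    by_cases hab : a = b
    · subst hab
      have hs : ∑ i ∈ T, c i * (1 - (if r i = some a then 1 else 0)) = 0 := by
        simp only [mul_sub, Finset.sum_sub_distrib, h a, mul_one, h1]
        norm_num
      have := eq_zero_of_weighted h0 (fun i _ _ => by split_ifs <;> norm_num) hs i hi hc
      simp [hr] at this
    · have hs : ∑ i ∈ T, c i *
          (1 - (if r i = some a then 1 else 0) - (if r i = some b then 1 else 0)) = 0 := by
        simp only [mul_sub, Finset.sum_sub_distrib, h a, h b, mul_one, h1]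
        simp [hab, Ne.symm hab]
        norm_num
      have := eq_zero_of_weighted h0 (fun i _ _ => by
        split_ifs with e1 e2
        · exact (hab (Option.some_injective _ (e1.symm.trans e2))).elim
        all_goals norm_num) hs i hi hc
      simp [hr] at this

lemma half_sum (h0 : ∀ i ∈ T, 0 ≤ c i) (h1 : ∑ i ∈ T, c i = 1)
    (h : ∀ a : α, ∑ i ∈ T, c i * (if r i = some a then 1 else 0) =
      2⁻¹ * ((if x = some a then 1 else 0) + (if y = some a then 1 else 0))) (hxy : x ≠ y) :
    ∑ i ∈ T, c i * (if r i = x then 1 else 0) = 2⁻¹ := by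
  cases x with
  | some a => rw [h a, if_pos rfl, if_neg (Ne.symm hxy)]; norm_num
  | none =>
    obtain ⟨b, rfl⟩ := Option.ne_none_iff_exists'.1 (Ne.symm hxy)
    have hm := half_mem h0 h1 h
    have : ∀ i ∈ T, c i * (if r i = none then 1 else 0) =
        c i - c i * (if r i = some b then 1 else 0) := by
      intro i hi
      by_cases e : c i = 0
      · simp [e]
      · rcases hm i hi e with hr | hr <;> simp [hr]
    rw [Finset.sum_congr rfl this, Finset.sum_sub_distrib, h1, h b, if_neg hxy,
      if_pos rfl]
    norm_num

/-- Two events of equal probability, one contained in the other, agree almost surely. -/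
lemma iff_of_imp (h0 : ∀ i ∈ T, 0 ≤ c i) {P Q : ι → Prop} [DecidablePred P]
    [DecidablePred Q] (hPQ : ∀ i ∈ T, c i ≠ 0 → P i → Q i)
    (hs : ∑ i ∈ T, c i * (if P i then 1 else 0) = ∑ i ∈ T, c i * (if Q i then 1 else 0)) :
    ∀ i ∈ T, c i ≠ 0 → (P i ↔ Q i) := by
  intro i hi hc
  refine ⟨hPQ i hi hc, fun hQ => ?_⟩
  have hz : ∑ i ∈ T, c i * ((if Q i then 1 else 0) - (if P i then 1 else 0)) = 0 := by
    simp only [mul_sub, Finset.sum_sub_distrib, hs, sub_self]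
  have := eq_zero_of_weighted h0 (fun i hi hc => by
    by_cases hP : P i
    · simp [hP, hPQ i hi hc hP]
    · simp only [hP, if_false]; split_ifs <;> norm_num) hz i hi hc
  by_contra hP
  simp [hP, hQ] at this

end Half

/-! ### Adjacency and the path -/

section Adjacent

variable {M W : Type*} [Fintype M] [Fintype W] {I : SMTI M W} {μ μ' : Set (M × W)}
  {C : Set (M × W)}

lemma exch_adjacent (hμ : I.IsStable μ) (hμ' : I.IsStable μ')
    (hC : I.IsComp (I.starV μ μ') C) (hnt : ¬ C.Subsingleton) :
    AdjacentSM I μ (exch μ μ' C) := by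
  have hν := exch_stable hμ hμ' hC
  refine ⟨fun e => exch_ne hμ hμ' hC hnt (chi_injective e), ?_⟩
  intro T c hT h0 h1 hs
  have hmp : ∀ m w, ∑ ρ ∈ T, c ρ * (if mpartner ρ m = some w then 1 else 0) =
      2⁻¹ * ((if mpartner μ m = some w then 1 else 0) +
        (if mpartner (exch μ μ' C) m = some w then 1 else 0)) := by
    intro m w
    have := congrFun hs (m, w)
    simp only [Finset.sum_apply, Pi.smul_apply, Pi.add_apply, smul_eq_mul, chi] at this
    simp only [mpartner_eq_some hμ.1, mpartner_eq_some hν.1]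
    convert this using 1
    exact Finset.sum_congr rfl fun ρ hρ => by simp only [mpartner_eq_some (hT ρ hρ).1]
  have hwp : ∀ w m, ∑ ρ ∈ T, c ρ * (if wpartner ρ w = some m then 1 else 0) =
      2⁻¹ * ((if wpartner μ w = some m then 1 else 0) +
        (if wpartner (exch μ μ' C) w = some m then 1 else 0)) := by
    intro w m
    have := congrFun hs (m, w)
    simp only [Finset.sum_apply, Pi.smul_apply, Pi.add_apply, smul_eq_mul, chi] at this
    simp only [wpartner_eq_some hμ.1, wpartner_eq_some hν.1]
    convert this using 1
    exact Finset.sum_congr rfl fun ρ hρ => by simp only [wpartner_eq_some (hT ρ hρ).1]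
  have hmM := fun m => half_mem h0 h1 (hmp m)
  have hmW := fun w => half_mem h0 h1 (hwp w)
  -- at every vertex of `C`, the man and the woman make the same choice between the two matchings
  have hAB : ∀ p ∈ C, ∀ ρ ∈ T, c ρ ≠ 0 →
      (mpartner ρ p.1 = mpartner μ p.1 ↔ wpartner ρ p.2 = wpartner μ p.2) := by
    rintro ⟨m, w⟩ hp
    have em := exch_m_in hμ.1 hμ'.1 hC hp
    have ew := exch_w_in hμ.1 hμ'.1 hC hp
    have nm := mpartner_ne hμ.1 hμ'.1 hC hnt hp
    have nw := wpartner_ne hμ.1 hμ'.1 hC hnt hp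
    have hmM := hmM m
    have hmW := hmW w
    have sm := half_sum h0 h1 (hmp m) (by rw [em]; exact nm)
    have sw := half_sum h0 h1 (hwp w) (by rw [ew]; exact nw)
    simp only at em ew nm nw
    rw [em] at hmM
    rw [ew] at hmW
    by_cases h1 : (m, w) ∈ μ
    · intro ρ hρ _
      simp only
      rw [(mpartner_eq_some hμ.1).2 h1, (wpartner_eq_some hμ.1).2 h1,
        mpartner_eq_some (hT ρ hρ).1, wpartner_eq_some (hT ρ hρ).1]
    by_cases h2 : (m, w) ∈ μ'
    · intro ρ hρ hc
      have a1 := hmM ρ hρ hc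
      have a2 := hmW ρ hρ hc
      have b1 : mpartner ρ m = mpartner μ' m ↔ wpartner ρ w = wpartner μ' w := by
        rw [(mpartner_eq_some hμ'.1).2 h2, (wpartner_eq_some hμ'.1).2 h2,
          mpartner_eq_some (hT ρ hρ).1, wpartner_eq_some (hT ρ hρ).1]
      grind
    -- a vertex outside both matchings lies strictly above one partner on each side; by stability of
    -- `μ` and `μ'` these two lower partners belong to different matchings
    have hS := hC.subset hp
    have hA := hS.1
    have s := hμ.2 _ hA
    have s' := hμ'.2 _ hA
    have n1 : some w ≠ mpartner μ m := fun e => h1 ((mpartner_eq_some hμ.1).1 e.symm)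
    have n2 : some w ≠ mpartner μ' m := fun e => h2 ((mpartner_eq_some hμ'.1).1 e.symm)
    have n3 : some m ≠ wpartner μ w := fun e => h1 ((wpartner_eq_some hμ.1).1 e.symm)
    have n4 : some m ≠ wpartner μ' w := fun e => h2 ((wpartner_eq_some hμ'.1).1 e.symm)
    have bm := (hS.2.1.resolve_left n1).resolve_left n2
    have bw := (hS.2.2.resolve_left n3).resolve_left n4
    simp only at bm bw s s'
    rcases bm with ⟨bm, -⟩ | ⟨bm, -⟩ <;> rcases bw with ⟨bw, -⟩ | ⟨bw, -⟩
    · exact (s.elim bm.2 bw.2).elim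
    -- `μ(m) < w` and `μ'(w) < m`: `(m, w)` would block a `ρ` with `ρ(m) = μ(m)`, `ρ(w) = μ'(w)`
    · refine iff_of_imp h0 (fun ρ hρ hc hP => (hmW ρ hρ hc).resolve_right fun e => ?_)
        (sm.trans sw.symm)
      have sr := (hT ρ hρ).2 _ hA
      simp only [hP, e] at sr
      exact sr.elim bm.2 bw.2
    · refine fun ρ hρ hc => (iff_of_imp h0 (P := fun ρ => wpartner ρ w = wpartner μ w)
        (Q := fun ρ => mpartner ρ m = mpartner μ m)
        (fun ρ hρ hc hP => (hmM ρ hρ hc).resolve_right fun e => ?_)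
        (sw.trans sm.symm) ρ hρ hc).symm
      have sr := (hT ρ hρ).2 _ hA
      simp only [hP, e] at sr
      exact sr.elim bm.2 bw.2
    · exact (s'.elim bm.2 bw.2).elim
  intro ρ hρ hc
  have hconst : ∀ p ∈ C, ∀ q ∈ C,
      (mpartner ρ p.1 = mpartner μ p.1 ↔ mpartner ρ q.1 = mpartner μ q.1) := by
    intro p hp q hq
    have hr := hC.connected hp hq
    clear hq
    induction hr with
    | refl => exact Iff.rfl
    | @tail a b hab hb ih =>
      have ha : a ∈ C := hC.mem_of_reach hp hb.1 hab
      have hbC : b ∈ C := hC.mem_of_reach ha hb.2.1 (.single hb)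
      refine ih.trans ?_
      rcases (adjIn_block hb).2 with e | e
      · rw [e]
      · rw [hAB a ha ρ hρ hc, hAB b hbC ρ hρ hc, e]
  have hext : ∀ {ν}, I.IsMatching ν → (∀ m, mpartner ρ m = mpartner ν m) → ρ = ν := by
    intro ν hν' h
    ext ⟨m, w⟩
    rw [← mpartner_eq_some (hT ρ hρ).1, ← mpartner_eq_some hν', h]
  obtain ⟨p, hp, -⟩ := Set.not_subsingleton_iff.1 hnt
  by_cases hch : mpartner ρ p.1 = mpartner μ p.1
  · left
    refine congrArg chi (hext hμ.1 fun m => ?_)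
    by_cases hm : ∃ w, (m, w) ∈ C
    · obtain ⟨w, hm⟩ := hm
      exact (hconst p hp _ hm).1 hch
    · push Not at hm
      have := hmM m ρ hρ hc
      rw [exch_m_out hm] at this
      exact this.elim id id
  · right
    refine congrArg chi (hext hν.1 fun m => ?_)
    by_cases hm : ∃ w, (m, w) ∈ C
    · obtain ⟨w, hm⟩ := hm
      exact (hmM m ρ hρ hc).resolve_left fun e => hch ((hconst p hp _ hm).2 e)
    · push Not at hm
      have := hmM m ρ hρ hc
      rw [exch_m_out hm] at this ⊢
      exact this.elim id id

/-- The people whose partners in `μ` and `μ'` differ. -/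
noncomputable def active (μ μ' : Set (M × W)) : Finset (M ⊕ W) :=
  Finset.univ.filter fun d => Sum.elim (fun m => mpartner μ m ≠ mpartner μ' m)
    (fun w => wpartner μ w ≠ wpartner μ' w) d

lemma persons_subset_active (hμ : I.IsStable μ) (hμ' : I.IsStable μ')
    (hC : I.IsComp (I.starV μ μ') C) (hnt : ¬ C.Subsingleton) : persons C ⊆ active μ μ' := by
  intro d hd
  obtain ⟨p, hp, rfl | rfl⟩ := mem_persons.1 hd
  · simpa [active] using mpartner_ne hμ.1 hμ'.1 hC hnt hp
  · simpa [active] using wpartner_ne hμ.1 hμ'.1 hC hnt hp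

lemma active_exch_subset (hμ : I.IsStable μ) (hμ' : I.IsStable μ')
    (hC : I.IsComp (I.starV μ μ') C) :
    active (exch μ μ' C) μ' ⊆ active μ μ' \ persons C := by
  rintro (m | w) hd
  · simp only [active, Finset.mem_filter, Finset.mem_univ, true_and, Sum.elim_inl] at hd
    have hm : ∀ w, (m, w) ∉ C := fun w hw => hd (exch_m_in hμ.1 hμ'.1 hC hw)
    rw [exch_m_out hm] at hd
    simp only [Finset.mem_sdiff, mem_persons, active, Finset.mem_filter, Finset.mem_univ,
      true_and, Sum.elim_inl]
    refine ⟨hd, ?_⟩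
    rintro ⟨⟨m', w⟩, hp, h | h⟩
    · cases h
      exact hm w hp
    · cases h
  · simp only [active, Finset.mem_filter, Finset.mem_univ, true_and, Sum.elim_inr] at hd
    have hw : ∀ m, (m, w) ∉ C := fun m hm => hd (exch_w_in hμ.1 hμ'.1 hC hm)
    rw [exch_w_out hw] at hd
    simp only [Finset.mem_sdiff, mem_persons, active, Finset.mem_filter, Finset.mem_univ,
      true_and, Sum.elim_inr]
    refine ⟨hd, ?_⟩
    rintro ⟨⟨m, w'⟩, hp, h | h⟩
    · cases h
    · cases h
      exact hw m hp

/-- Each exchange along a nontrivial component is one edge of the path, and it removes at least the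
three people of that component from `active`. -/
lemma exists_path (n : ℕ) : ∀ μ, I.IsStable μ → I.IsStable μ' → (active μ μ').card ≤ n →
    ∃ k, 3 * k ≤ n ∧ ∃ f : ℕ → Set (M × W), f 0 = μ ∧ f k = μ' ∧
      (∀ j ≤ k, I.IsStable (f j)) ∧ ∀ j < k, I.AdjacentSM (f j) (f (j + 1)) := by
  induction n using Nat.strong_induction_on with
  | _ n ih =>
    intro μ hμ hμ' hn
    by_cases hne : μ = μ'
    · subst hne
      exact ⟨0, by simp, fun _ => μ, rfl, rfl, fun _ _ => hμ, fun j hj => by simp at hj⟩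
    obtain ⟨C, hC, hnt⟩ := exists_comp hμ hμ' hne
    have h3 := three_le_card_persons hnt
    have hsub := persons_subset_active hμ hμ' hC hnt
    have hle := Finset.card_le_card (active_exch_subset hμ hμ' hC)
    rw [Finset.card_sdiff_of_subset hsub] at hle
    have hle2 := Finset.card_le_card hsub
    have hst := exch_stable hμ hμ' hC
    obtain ⟨k, hk, f, f0, fk, fs, fa⟩ := ih (n - 3) (by omega) _ hst hμ' (by omega)
    refine ⟨k + 1, by omega, fun j => Nat.casesOn j μ f, rfl, fk, ?_, ?_⟩
    · rintro (_ | j) hj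
      · exact hμ
      · exact fs j (by omega)
    · rintro (_ | j) hj
      · have := exch_adjacent hμ hμ' hC hnt
        rw [← f0] at this
        exact this
      · exact fa j (by omega)

end Adjacent

end SMTI

open SMTI in

theorem stmt16 {M W : Type*} [Fintype M] [Fintype W] (I : SMTI M W)
    (μ μ' : Set (M × W)) (hμ : I.IsStable μ) (hμ' : I.IsStable μ') (hne : μ ≠ μ') :
    (∀ C, I.IsNontrivialComp (I.starV μ μ') C → ∃ u ∈ C, ∃ v ∈ C, u ≠ v) ∧
    {C | I.IsNontrivialComp (I.starV μ μ') C}.ncard ≤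
      (Fintype.card M + Fintype.card W) / 3 ∧
    ∃ k ≤ (Fintype.card M + Fintype.card W) / 3, ∃ f : ℕ → Set (M × W),
      f 0 = μ ∧ f k = μ' ∧ (∀ j ≤ k, I.IsStable (f j)) ∧
      ∀ j < k, I.AdjacentSM (f j) (f (j + 1)) := by
  refine ⟨fun C hC => Set.not_subsingleton_iff.1 hC.2, ncard_comps_le starV_subset, ?_⟩
  obtain ⟨k, hk, h⟩ := exists_path _ μ hμ hμ' le_rfl
  have hcard : (active μ μ').card ≤ Fintype.card (M ⊕ W) := Finset.card_le_univ _
  rw [Fintype.card_sum] at hcard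
  exact ⟨k, by omega, h⟩
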